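/- Let x be a complex number with Re(x) > 0. Define, for m ≥ 1, κ_{2m} = 2(3m−1)³/(27(2m−1)) and κ_{2m−1} = 2(3m−2)³/(27(2m−1)). Then the continued fraction x/2 + K_{m=1}^∞(κ_m/x) (all partial denominators after the initial term equal to x) converges to a nonzero value v, and Γ((x+2/3)/2)³ / Γ((x+4/3)/2)³ = 1/v. -/

import Mathlib

open Filter

noncomputable def cfA (a b : ℕ → ℂ) : ℕ → ℂ
  | 0 => 1
  | 1 => b 0
  | n + 2 => b (n + 1) * cfA a b (n + 1) + a (n + 1) * cfA a b n

noncomputable def cfB (a b : ℕ → ℂ) : ℕ → ℂ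
  | 0 => 0
  | 1 => 1
  | n + 2 => b (n + 1) * cfB a b (n + 1) + a (n + 1) * cfB a b n

/-- The continued fraction `b 0 + K_{n=1}^∞ (a n / b n)` converges to `v`. -/
def CFConvergesTo (a b : ℕ → ℂ) (v : ℂ) : Prop :=
  (∀ᶠ n in atTop, cfB a b n ≠ 0) ∧
    Tendsto (fun n => cfA a b n / cfB a b n) atTop (nhds v)

/-- `κ_{2m} = 2(3m−1)³/(27(2m−1))`, `κ_{2m−1} = 2(3m−2)³/(27(2m−1))`. -/
noncomputable def aSeq : ℕ → ℂ := fun n =>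
  if n % 2 = 0 then
    2 * (3 * ((n / 2 : ℕ) : ℂ) - 1) ^ 3 / (27 * (2 * ((n / 2 : ℕ) : ℂ) - 1))
  else
    2 * (3 * (((n + 1) / 2 : ℕ) : ℂ) - 2) ^ 3 / (27 * (2 * (((n + 1) / 2 : ℕ) : ℂ) - 1))

/-- `b_0 = x/2`, and all later partial denominators equal `x`. -/
noncomputable def bSeq (x : ℂ) : ℕ → ℂ := fun n => if n = 0 then x / 2 else x

section General

variable {x : ℂ} {k : ℕ → ℝ} {A B : ℕ → ℂ}

lemma tail_form (hx : 0 < x.re) (hk : ∀ n, 0 < k n)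
    (hA : ∀ n, A (n + 2) = x * A (n + 1) + k (n + 1) * A n)
    (hB : ∀ n, B (n + 2) = x * B (n + 1) + k (n + 1) * B n) (j : ℕ) :
    ∀ n, ∃ w c : ℂ, x.re ≤ w.re ∧ c ≠ 0 ∧
      A (n + j + 2) = c * (A (n + 1) * w + k (n + 1) * A n) ∧
      B (n + j + 2) = c * (B (n + 1) * w + k (n + 1) * B n) := by
  induction j with
  | zero =>
    intro n
    refine ⟨x, 1, le_rfl, one_ne_zero, ?_, ?_⟩
    · rw [Nat.add_zero, hA]; ring
    · rw [Nat.add_zero, hB]; ring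
  | succ j ih =>
    intro n
    obtain ⟨w, c, hw, hc, h1, h2⟩ := ih (n + 1)
    have hw0 : w ≠ 0 := by
      rintro rfl
      simp at hw
      linarith
    refine ⟨x + k (n + 2) / w, c * w, ?_, mul_ne_zero hc hw0, ?_, ?_⟩
    · have : 0 ≤ ((k (n + 2) : ℂ) / w).re := by
        rw [Complex.div_re]
        simp only [Complex.ofReal_re, Complex.ofReal_im, zero_mul, zero_div, add_zero]
        have := hk (n + 2)
        have := Complex.normSq_nonneg w
        have : 0 ≤ w.re := by linarith
        positivity
      simp only [Complex.add_re]
      linarith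
    · rw [show n + (j + 1) + 2 = n + 1 + j + 2 by ring, h1, hA]
      field_simp
      ring
    · rw [show n + (j + 1) + 2 = n + 1 + j + 2 by ring, h2, hB]
      field_simp
      ring

/-- real part of `B (n+1) * conj (B n)` -/
def DD (B : ℕ → ℂ) (n : ℕ) : ℝ := (B (n + 1) * (starRingEnd ℂ) (B n)).re

noncomputable def PP (k : ℕ → ℝ) (n : ℕ) : ℝ := ∏ i ∈ Finset.range n, k (i + 1)

lemma PP_pos (hk : ∀ n, 0 < k n) (n : ℕ) : 0 < PP k n := Finset.prod_pos fun _ _ => hk _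

lemma PP_succ (n : ℕ) : PP k (n + 1) = PP k n * k (n + 1) := Finset.prod_range_succ _ _

lemma DD_succ (hB : ∀ n, B (n + 2) = x * B (n + 1) + k (n + 1) * B n) (n : ℕ) :
    DD B (n + 1) = x.re * ‖B (n + 1)‖ ^ 2 + k (n + 1) * DD B n := by
  unfold DD
  rw [hB, ← Complex.normSq_eq_norm_sq, Complex.normSq_apply]
  simp
  ring

noncomputable def EE (k : ℕ → ℝ) (B : ℕ → ℂ) (n : ℕ) : ℝ := DD B n / PP k n

lemma EE_succ (hk : ∀ n, 0 < k n)
    (hB : ∀ n, B (n + 2) = x * B (n + 1) + k (n + 1) * B n) (n : ℕ) :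
    EE k B (n + 1) = EE k B n + x.re * ‖B (n + 1)‖ ^ 2 / PP k (n + 1) := by
  unfold EE
  rw [DD_succ hB, PP_succ]
  have := (PP_pos hk n).ne'
  have := (hk (n + 1)).ne'
  field_simp
  ring

lemma EE_zero (hB0 : B 0 = 0) : EE k B 0 = 0 := by
  simp [EE, DD, hB0]

lemma EE_mono (hx : 0 < x.re) (hk : ∀ n, 0 < k n)
    (hB : ∀ n, B (n + 2) = x * B (n + 1) + k (n + 1) * B n) : Monotone (EE k B) := by
  refine monotone_nat_of_le_succ fun n => ?_
  rw [EE_succ hk hB]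
  have := PP_pos hk (n + 1)
  have : 0 ≤ x.re * ‖B (n + 1)‖ ^ 2 / PP k (n + 1) := by positivity
  linarith

lemma EE_one_pos (hx : 0 < x.re) (hk : ∀ n, 0 < k n)
    (hB : ∀ n, B (n + 2) = x * B (n + 1) + k (n + 1) * B n) (hB0 : B 0 = 0) (hB1 : B 1 = 1) :
    0 < EE k B 1 := by
  have := EE_succ hk hB 0
  simp only [zero_add] at this
  rw [this, EE_zero hB0, hB1]
  have := PP_pos hk 1
  simp
  positivity

lemma EE_pos (hx : 0 < x.re) (hk : ∀ n, 0 < k n)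
    (hB : ∀ n, B (n + 2) = x * B (n + 1) + k (n + 1) * B n) (hB0 : B 0 = 0) (hB1 : B 1 = 1)
    (n : ℕ) : 0 < EE k B (n + 1) :=
  (EE_one_pos hx hk hB hB0 hB1).trans_le (EE_mono hx hk hB (by omega))

lemma DD_pos (hx : 0 < x.re) (hk : ∀ n, 0 < k n)
    (hB : ∀ n, B (n + 2) = x * B (n + 1) + k (n + 1) * B n) (hB0 : B 0 = 0) (hB1 : B 1 = 1)
    (n : ℕ) : 0 < DD B (n + 1) := by
  have h := EE_pos hx hk hB hB0 hB1 n
  unfold EE at h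
  exact (div_pos_iff_of_pos_right (PP_pos hk _)).1 h

lemma B_ne (hx : 0 < x.re) (hk : ∀ n, 0 < k n)
    (hB : ∀ n, B (n + 2) = x * B (n + 1) + k (n + 1) * B n) (hB0 : B 0 = 0) (hB1 : B 1 = 1)
    (n : ℕ) : B (n + 1) ≠ 0 := by
  intro h
  have h2 := DD_pos hx hk hB hB0 hB1 n
  simp [DD, h] at h2

lemma EE_tendsto (hx : 0 < x.re) (hk : ∀ n, 0 < k n) (hk2 : ∀ n, k n ≤ ((n : ℝ) + 1) ^ 2)
    (hB : ∀ n, B (n + 2) = x * B (n + 1) + k (n + 1) * B n) (hB0 : B 0 = 0) (hB1 : B 1 = 1) :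
    Tendsto (EE k B) atTop atTop := by
  set c := EE k B 1 with hc
  have hc0 : 0 < c := EE_one_pos hx hk hB hB0 hB1
  have key : ∀ n : ℕ, EE k B (n + 1) + 2 * x.re * c / ((n : ℝ) + 4) ≤ EE k B (n + 3) := by
    intro n
    have e1 := EE_succ hk hB (n + 1)
    have e2 := EE_succ hk hB (n + 2)
    have h1 : c * PP k (n + 1 + 1) ≤ ‖B (n + 2 + 1)‖ * ‖B (n + 1 + 1)‖ := by
      have h3 : c ≤ EE k B (n + 2) := EE_mono hx hk hB (by omega)
      have h4 : DD B (n + 2) ≤ ‖B (n + 2 + 1)‖ * ‖B (n + 1 + 1)‖ := by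
        unfold DD
        refine (Complex.re_le_norm _).trans ?_
        simp
      have := PP_pos hk (n + 2)
      unfold EE at h3
      rw [le_div_iff₀ this] at h3
      linarith
    have hP := PP_pos hk (n + 1 + 1)
    have hP2 := PP_pos hk (n + 2 + 1)
    have hk3 := hk (n + 2 + 1)
    have e3 : PP k (n + 2 + 1) = PP k (n + 1 + 1) * k (n + 2 + 1) := PP_succ _
    rw [e3] at e2
    have hn : (0 : ℝ) < (n : ℝ) + 4 := by positivity
    have hkb : k (n + 2 + 1) ≤ ((n : ℝ) + 4) ^ 2 := by
      have := hk2 (n + 2 + 1)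
      push_cast at this
      linarith
    have h5 : ‖B (n + 2 + 1)‖ ^ 2 / ((n : ℝ) + 4) ^ 2 ≤ ‖B (n + 2 + 1)‖ ^ 2 / k (n + 2 + 1) := by
      gcongr
    have h6 : 2 * (‖B (n + 2 + 1)‖ * ‖B (n + 1 + 1)‖) / ((n : ℝ) + 4) ≤
        ‖B (n + 1 + 1)‖ ^ 2 + ‖B (n + 2 + 1)‖ ^ 2 / ((n : ℝ) + 4) ^ 2 := by
      have := sq_nonneg (‖B (n + 1 + 1)‖ - ‖B (n + 2 + 1)‖ / ((n : ℝ) + 4))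
      have h7 : (‖B (n + 1 + 1)‖ - ‖B (n + 2 + 1)‖ / ((n : ℝ) + 4)) ^ 2 =
        ‖B (n + 1 + 1)‖ ^ 2 + ‖B (n + 2 + 1)‖ ^ 2 / ((n : ℝ) + 4) ^ 2 -
          2 * (‖B (n + 2 + 1)‖ * ‖B (n + 1 + 1)‖) / ((n : ℝ) + 4) := by
        field_simp
        ring
      linarith
    have h8 : 2 * (c * PP k (n + 1 + 1)) / ((n : ℝ) + 4) ≤
        2 * (‖B (n + 2 + 1)‖ * ‖B (n + 1 + 1)‖) / ((n : ℝ) + 4) := by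
      gcongr
    have h9 : x.re / PP k (n + 1 + 1) * (2 * (c * PP k (n + 1 + 1)) / ((n : ℝ) + 4)) ≤
        x.re / PP k (n + 1 + 1) * (‖B (n + 1 + 1)‖ ^ 2 + ‖B (n + 2 + 1)‖ ^ 2 / k (n + 2 + 1)) := by
      apply mul_le_mul_of_nonneg_left _ (by positivity)
      linarith
    have h10 : x.re / PP k (n + 1 + 1) * (2 * (c * PP k (n + 1 + 1)) / ((n : ℝ) + 4)) =
        2 * x.re * c / ((n : ℝ) + 4) := by
      field_simp
    have h11 : x.re / PP k (n + 1 + 1) *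
        (‖B (n + 1 + 1)‖ ^ 2 + ‖B (n + 2 + 1)‖ ^ 2 / k (n + 2 + 1)) =
        x.re * ‖B (n + 1 + 1)‖ ^ 2 / PP k (n + 1 + 1) +
        x.re * ‖B (n + 2 + 1)‖ ^ 2 / (PP k (n + 1 + 1) * k (n + 2 + 1)) := by
      field_simp
    have e4 : EE k B (n + 3) = EE k B (n + 2 + 1) := rfl
    have e5 : EE k B (n + 1 + 1) = EE k B (n + 2) := rfl
    linarith
  have hsum : ∀ j : ℕ, x.re * c / 2 * ∑ i ∈ Finset.range j, (1 / ((i : ℝ) + 1)) ≤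
      EE k B (2 * j + 1) := by
    intro j
    induction j with
    | zero => simpa using hc0.le
    | succ j ih =>
      have h1 := key (2 * j)
      rw [Finset.sum_range_succ, mul_add]
      have h2 : x.re * c / 2 * (1 / ((j : ℝ) + 1)) ≤ 2 * x.re * c / (((2 * j : ℕ) : ℝ) + 4) := by
        push_cast
        rw [div_mul_div_comm, div_le_div_iff₀ (by positivity) (by positivity)]
        have : 0 < x.re * c := by positivity
        have hj : (0 : ℝ) ≤ j := by positivity
        nlinarith [mul_nonneg this.le hj]
      rw [show 2 * (j + 1) + 1 = 2 * j + 3 by ring]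
      linarith
  have hdiv : Tendsto (fun j : ℕ => x.re * c / 2 * ∑ i ∈ Finset.range j, (1 / ((i : ℝ) + 1)))
      atTop atTop :=
    Real.tendsto_sum_range_one_div_nat_succ_atTop.const_mul_atTop (by positivity)
  refine tendsto_atTop_atTop_of_monotone (EE_mono hx hk hB) fun b => ?_
  obtain ⟨j, hj⟩ := (hdiv.eventually_ge_atTop b).exists
  exact ⟨_, hj.trans (hsum j)⟩

lemma wronskian (hk : ∀ n, 0 < k n)
    (hA : ∀ n, A (n + 2) = x * A (n + 1) + k (n + 1) * A n)
    (hB : ∀ n, B (n + 2) = x * B (n + 1) + k (n + 1) * B n)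
    (hB0 : B 0 = 0) (hB1 : B 1 = 1) (hA0 : A 0 = 1) (n : ℕ) :
    ‖A n * B (n + 1) - A (n + 1) * B n‖ = PP k n := by
  induction n with
  | zero => simp [hB0, hB1, hA0, PP]
  | succ n ih =>
    rw [PP_succ, ← ih, hA, hB]
    have : A (n + 1) * (x * B (n + 1) + k (n + 1) * B n) -
        (x * A (n + 1) + k (n + 1) * A n) * B (n + 1) =
        - ((A n * B (n + 1) - A (n + 1) * B n) * (k (n + 1) : ℂ)) := by ring
    rw [this, norm_neg, norm_mul, Complex.norm_of_nonneg (hk _).le]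

lemma dist_bound (hx : 0 < x.re) (hk : ∀ n, 0 < k n)
    (hA : ∀ n, A (n + 2) = x * A (n + 1) + k (n + 1) * A n)
    (hB : ∀ n, B (n + 2) = x * B (n + 1) + k (n + 1) * B n)
    (hB0 : B 0 = 0) (hB1 : B 1 = 1) (hA0 : A 0 = 1) (n j : ℕ) :
    ‖A (n + 1 + j + 2) / B (n + 1 + j + 2) - A (n + 1 + 1) / B (n + 1 + 1)‖ ≤
      1 / EE k B (n + 1) := by
  obtain ⟨w, c, hw, hc, h1, h2⟩ := tail_form hx hk hA hB j (n + 1)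
  have hW := wronskian hk hA hB hB0 hB1 hA0 (n + 1)
  have hne := B_ne hx hk hB hB0 hB1 (n + 1 + j + 1)
  have hne1 := B_ne hx hk hB hB0 hB1 (n + 1)
  have hD := DD_pos hx hk hB hB0 hB1 n
  have hP := PP_pos hk (n + 1)
  have hkn := hk (n + 1 + 1)
  generalize hA1' : A (n + 1 + 1) = A1 at *
  generalize hB1' : B (n + 1 + 1) = B1 at *
  generalize hA0' : A (n + 1) = A0 at *
  generalize hB0' : B (n + 1) = B0 at *
  have hne' : B1 * w + k (n + 1 + 1) * B0 ≠ 0 := by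
    intro h
    apply hne
    show B (n + 1 + j + 2) = 0
    rw [h2, h, mul_zero]
  rw [h1, h2, mul_div_mul_left _ _ hc, div_sub_div _ _ hne' hne1]
  have e : (A1 * w + k (n + 1 + 1) * A0) * B1 - (B1 * w + k (n + 1 + 1) * B0) * A1 =
     (A0 * B1 - A1 * B0) * (k (n + 1 + 1) : ℂ) := by ring
  rw [e, norm_div, norm_mul, hW, Complex.norm_of_nonneg hkn.le, EE, one_div_div]
  have hD' : DD B (n + 1) = (B1 * (starRingEnd ℂ) B0).re := by rw [DD, hB1', hB0']
  have hlow : k (n + 1 + 1) * DD B (n + 1) ≤ ‖(B1 * w + k (n + 1 + 1) * B0) * B1‖ := by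
    have : ‖(B1 * w + k (n + 1 + 1) * B0) * B1‖ =
        ‖(B1 * w + k (n + 1 + 1) * B0) * (starRingEnd ℂ) B1‖ := by
      rw [norm_mul, norm_mul, Complex.norm_conj]
    rw [this]
    refine le_trans ?_ (Complex.re_le_norm _)
    have e2 : ((B1 * w + k (n + 1 + 1) * B0) * (starRingEnd ℂ) B1).re =
       w.re * (B1.re ^ 2 + B1.im ^ 2) + k (n + 1 + 1) * DD B (n + 1) := by
      rw [hD']
      simp
      ring
    rw [e2]
    have : 0 ≤ w.re := by linarith
    have : 0 ≤ w.re * (B1.re ^ 2 + B1.im ^ 2) := by positivity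
    linarith
  calc PP k (n + 1) * k (n + 1 + 1) / ‖(B1 * w + k (n + 1 + 1) * B0) * B1‖
      ≤ PP k (n + 1) * k (n + 1 + 1) / (k (n + 1 + 1) * DD B (n + 1)) := by gcongr
    _ = PP k (n + 1) / DD B (n + 1) := by field_simp

lemma exists_limit (hx : 0 < x.re) (hk : ∀ n, 0 < k n) (hk2 : ∀ n, k n ≤ ((n : ℝ) + 1) ^ 2)
    (hA : ∀ n, A (n + 2) = x * A (n + 1) + k (n + 1) * A n)
    (hB : ∀ n, B (n + 2) = x * B (n + 1) + k (n + 1) * B n)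
    (hB0 : B 0 = 0) (hB1 : B 1 = 1) (hA0 : A 0 = 1) :
    ∃ v, Tendsto (fun n => A n / B n) atTop (nhds v) := by
  have hE := EE_tendsto hx hk hk2 hB hB0 hB1
  have hE1 : Tendsto (fun n => 1 / EE k B (n + 1)) atTop (nhds 0) := by
    simp only [one_div]
    exact ((tendsto_add_atTop_iff_nat 1).2 hE).inv_tendsto_atTop
  have hc : CauchySeq (fun n => A (n + 2) / B (n + 2)) := by
    refine cauchySeq_of_le_tendsto_0' (fun n => 1 / EE k B (n + 1)) ?_ hE1
    intro n m hnm
    rcases hnm.eq_or_lt with rfl | hlt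
    · rw [dist_self]
      have := EE_pos hx hk hB hB0 hB1 n
      positivity
    · obtain ⟨j, rfl⟩ := Nat.exists_eq_add_of_lt hlt
      rw [dist_comm, dist_eq_norm]
      have := dist_bound hx hk hA hB hB0 hB1 hA0 n j
      rw [show n + j + 1 + 2 = n + 1 + j + 2 by ring]
      exact this
  obtain ⟨v, hv⟩ := cauchySeq_tendsto_of_complete hc
  exact ⟨v, (tendsto_add_atTop_iff_nat 2).1 hv⟩

lemma limit_bound (hx : 0 < x.re) (hk : ∀ n, 0 < k n)
    (hA : ∀ n, A (n + 2) = x * A (n + 1) + k (n + 1) * A n)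
    (hB : ∀ n, B (n + 2) = x * B (n + 1) + k (n + 1) * B n)
    (hB0 : B 0 = 0) (hB1 : B 1 = 1) (hA0 : A 0 = 1) (hA1 : A 1 = x / 2)
    {v : ℂ} (hv : Tendsto (fun n => A n / B n) atTop (nhds v)) :
    ‖v - x / 2‖ ≤ k 1 / x.re := by
  have h1 : Tendsto (fun n => ‖A (n + 2) / B (n + 2) - x / 2‖) atTop (nhds ‖v - x / 2‖) :=
    (((tendsto_add_atTop_iff_nat 2).2 hv).sub_const _).norm
  refine le_of_tendsto' h1 fun j => ?_
  obtain ⟨w, c, hw, hc, h1, h2⟩ := tail_form hx hk hA hB j 0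
  simp only [zero_add, hA1, hA0, hB1, hB0, mul_zero, add_zero, one_mul, mul_one] at h1 h2
  have hw0 : w ≠ 0 := by
    rintro rfl
    simp at hw
    linarith
  rw [h1, h2]
  have : c * (x / 2 * w + (k 1 : ℂ)) / (c * w) - x / 2 = (k 1 : ℂ) / w := by
    field_simp
    ring
  rw [this, norm_div, Complex.norm_of_nonneg (hk _).le]
  have := hk 1
  have : x.re ≤ ‖w‖ := hw.trans (Complex.re_le_norm _)
  gcongr

end General

noncomputable def kap (n : ℕ) : ℝ :=
  if n % 2 = 0 then
    2 * (3 * ((n / 2 : ℕ) : ℝ) - 1) ^ 3 / (27 * (2 * ((n / 2 : ℕ) : ℝ) - 1))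
  else
    2 * (3 * (((n + 1) / 2 : ℕ) : ℝ) - 2) ^ 3 / (27 * (2 * (((n + 1) / 2 : ℕ) : ℝ) - 1))

lemma aSeq_eq (n : ℕ) : aSeq n = (kap n : ℂ) := by
  unfold aSeq kap
  split_ifs <;> push_cast <;> rfl

lemma kap_even (m : ℕ) : kap (2 * m) = 2 * (3 * (m : ℝ) - 1) ^ 3 / (27 * (2 * (m : ℝ) - 1)) := by
  unfold kap
  rw [if_pos (by omega), show 2 * m / 2 = m by omega]

lemma kap_odd (m : ℕ) : kap (2 * m + 1) = 2 * (3 * (m : ℝ) + 1) ^ 3 / (27 * (2 * (m : ℝ) + 1)) := by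
  unfold kap
  rw [if_neg (by omega), show (2 * m + 1 + 1) / 2 = m + 1 by omega]
  push_cast
  ring

lemma kap_even' (m : ℕ) :
    kap (2 * m + 2) = 2 * (3 * (m : ℝ) + 2) ^ 3 / (27 * (2 * (m : ℝ) + 1)) := by
  rw [show 2 * m + 2 = 2 * (m + 1) by ring, kap_even]
  push_cast
  ring

lemma kap_zero : kap 0 = 2 / 27 := by
  have := kap_even 0
  norm_num at this
  exact this

lemma nat_cases (n : ℕ) : n = 0 ∨ (∃ m, n = 2 * m + 1) ∨ ∃ m, n = 2 * m + 2 := by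
  rcases Nat.even_or_odd' n with ⟨m, rfl | rfl⟩
  · rcases m with _ | m
    · simp
    · exact Or.inr (Or.inr ⟨m, by ring⟩)
  · exact Or.inr (Or.inl ⟨m, rfl⟩)

lemma kap_pos (n : ℕ) : 0 < kap n := by
  rcases nat_cases n with rfl | ⟨m, rfl⟩ | ⟨m, rfl⟩
  · rw [kap_zero]; norm_num
  · rw [kap_odd]; positivity
  · rw [kap_even']; positivity

lemma kap_le (n : ℕ) : kap n ≤ ((n : ℝ) + 1) ^ 2 := by
  rcases nat_cases n with rfl | ⟨m, rfl⟩ | ⟨m, rfl⟩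
  · rw [kap_zero]; norm_num
  · rw [kap_odd, div_le_iff₀ (by positivity)]
    push_cast
    have : (0 : ℝ) ≤ m := by positivity
    have h : (2 * (m : ℝ) + 1 + 1) ^ 2 * (27 * (2 * m + 1)) - 2 * (3 * (m : ℝ) + 1) ^ 3 =
      162 * m ^ 3 + 486 * m ^ 2 + 414 * m + 106 - 0 * m := by ring
    have : 0 ≤ 162 * (m : ℝ) ^ 3 + 486 * m ^ 2 + 414 * m + 106 := by positivity
    linarith
  · rw [kap_even', div_le_iff₀ (by positivity)]
    push_cast
    have : (2 * (m : ℝ) + 2 + 1) ^ 2 * (27 * (2 * m + 1)) - 2 * (3 * (m : ℝ) + 2) ^ 3 =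
      162 * m ^ 3 + 648 * m ^ 2 + 738 * m + 227 - 0 * m := by ring
    have : 0 ≤ 162 * (m : ℝ) ^ 3 + 648 * m ^ 2 + 738 * m + 227 := by positivity
    linarith

noncomputable def c0 (n : ℕ) : ℝ := if n % 2 = 0 then 64 / 27 else 62 / 27

noncomputable def alph (x : ℂ) (n : ℕ) : ℂ :=
  x ^ 3 + (2 * n + 4) * x ^ 2 + (2 * n ^ 2 + 6 * n + 16 / 3) * x + 2 * n ^ 2 + 4 * n + c0 n

lemma c0_add (n : ℕ) : c0 (n + 2) = c0 n := by
  unfold c0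
  rw [Nat.add_mod_right]

lemma alph_add_two (x : ℂ) (n : ℕ) :
    (x + 2) * (4 * ((n : ℂ) + 2) * (x + 1)) + alph x n - 4 * (n + 1) * (x + 1) * x =
      alph x (n + 2) := by
  unfold alph
  rw [c0_add]
  push_cast
  ring

lemma alph_succ (x : ℂ) (n : ℕ) :
    (x + 2) * alph x n + 4 * n * (x + 1) * kap (n + 1) =
      x * alph x (n + 1) + 4 * (n + 2) * (x + 1) * kap (n + 2) := by
  unfold alph
  rcases Nat.even_or_odd' n with ⟨m, rfl | rfl⟩
  · have h : (2 * (m : ℂ) + 1) ≠ 0 := by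
      have : ((2 * m + 1 : ℕ) : ℂ) ≠ 0 := Nat.cast_ne_zero.2 (by omega)
      push_cast at this; exact this
    rw [kap_odd, kap_even']
    have e1 : c0 (2 * m) = 64 / 27 := by unfold c0; rw [if_pos (by omega)]
    have e2 : c0 (2 * m + 1) = 62 / 27 := by unfold c0; rw [if_neg (by omega)]
    rw [e1, e2]
    push_cast
    field_simp
    ring
  · have h : (2 * (m : ℂ) + 1) ≠ 0 := by
      have : ((2 * m + 1 : ℕ) : ℂ) ≠ 0 := Nat.cast_ne_zero.2 (by omega)
      push_cast at this; exact this
    have h' : (2 * ((m : ℂ) + 1) + 1) ≠ 0 := by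
      have : ((2 * (m + 1) + 1 : ℕ) : ℂ) ≠ 0 := Nat.cast_ne_zero.2 (by omega)
      push_cast at this; exact this
    rw [show 2 * m + 1 + 1 = 2 * m + 2 by ring, show 2 * m + 1 + 2 = 2 * (m + 1) + 1 by ring,
      kap_odd, kap_even']
    have e1 : c0 (2 * m + 2) = 64 / 27 := by unfold c0; rw [if_pos (by omega)]
    have e2 : c0 (2 * m + 1) = 62 / 27 := by unfold c0; rw [if_neg (by omega)]
    rw [e1, e2]
    push_cast
    field_simp
    ring

/-- propagation of the shift relation along the recurrence -/
lemma shift_rel {x p : ℂ} {Y Z : ℕ → ℂ}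
    (hY : ∀ n, Y (n + 2) = x * Y (n + 1) + kap (n + 1) * Y n)
    (hZ : ∀ n, Z (n + 2) = (x + 2) * Z (n + 1) + kap (n + 1) * Z n)
    (h0 : p * Z 1 = alph x 0 * Y 1 + 4 * (0 + 1) * kap 1 * (x + 1) * Y 0)
    (h1 : p * Z 2 = alph x 1 * Y 2 + 4 * (1 + 1) * kap 2 * (x + 1) * Y 1) (n : ℕ) :
    p * Z (n + 1) = alph x n * Y (n + 1) + 4 * (n + 1) * kap (n + 1) * (x + 1) * Y n := by
  induction n using Nat.twoStepInduction with
  | zero => simpa using h0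
  | one => simpa using h1
  | more n ih1 ih2 =>
    have a1 := alph_succ x (n + 1)
    have a2 := alph_add_two x n
    rw [show n + 2 + 1 = (n + 1) + 2 by ring, hZ, hY (n + 1)]
    have hYn := hY n
    simp only [show n + 1 + 1 = n + 2 by ring, show n + 1 + 2 = n + 3 by ring] at *
    push_cast at *
    linear_combination (x + 2) * ih2 + (kap (n + 2) : ℂ) * ih1 + Y (n + 2) * a1 +
      (kap (n + 2) : ℂ) * Y (n + 1) * a2 - 4 * (n + 1) * (x + 1) * (kap (n + 2) : ℂ) * hYn

noncomputable abbrev AA (x : ℂ) : ℕ → ℂ := cfA aSeq (bSeq x)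
noncomputable abbrev BB (x : ℂ) : ℕ → ℂ := cfB aSeq (bSeq x)

lemma AA_rec (x : ℂ) (n : ℕ) : AA x (n + 2) = x * AA x (n + 1) + kap (n + 1) * AA x n := by
  simp [AA, cfA, bSeq, aSeq_eq]

lemma BB_rec (x : ℂ) (n : ℕ) : BB x (n + 2) = x * BB x (n + 1) + kap (n + 1) * BB x n := by
  simp [BB, cfB, bSeq, aSeq_eq]

lemma AA0 (x : ℂ) : AA x 0 = 1 := rfl
lemma AA1 (x : ℂ) : AA x 1 = x / 2 := by simp [AA, cfA, bSeq]
lemma BB0 (x : ℂ) : BB x 0 = 0 := rfl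
lemma BB1 (x : ℂ) : BB x 1 = 1 := rfl

lemma kap1 : kap 1 = 2 / 27 := by
  have := kap_odd 0
  norm_num at this
  exact this

lemma kap2 : kap 2 = 16 / 27 := by
  have := kap_even' 0
  norm_num at this
  exact this

lemma AA_shift (x : ℂ) (n : ℕ) : (x + 2 / 3) ^ 3 * AA (x + 2) (n + 1) =
    alph x n * AA x (n + 1) + 4 * (n + 1) * kap (n + 1) * (x + 1) * AA x n := by
  refine shift_rel (AA_rec x) (AA_rec (x + 2)) ?_ ?_ n
  · rw [AA1, AA1, AA0, kap1]
    simp [alph, c0]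
    ring
  · rw [AA_rec _ 0, AA_rec _ 0]
    simp only [zero_add]
    rw [AA1, AA1, AA0, AA0, kap1, kap2]
    simp [alph, c0]
    ring

lemma BB_shift (x : ℂ) (n : ℕ) : (x + 4 / 3) ^ 3 * BB (x + 2) (n + 1) =
    alph x n * BB x (n + 1) + 4 * (n + 1) * kap (n + 1) * (x + 1) * BB x n := by
  refine shift_rel (BB_rec x) (BB_rec (x + 2)) ?_ ?_ n
  · rw [BB1, BB1, BB0, kap1]
    simp [alph, c0]
    ring
  · rw [BB_rec _ 0, BB_rec _ 0]
    simp only [zero_add]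
    rw [BB1, BB1, BB0, BB0, kap1, kap2]
    simp [alph, c0]
    ring

lemma x_add_ne {x : ℂ} (hx : 0 < x.re) {r : ℂ} (hr : 0 ≤ r.re) : x + r ≠ 0 := by
  intro h
  have := congrArg Complex.re h
  simp at this
  linarith

lemma alph_bound (x : ℂ) (hx : 0 < x.re) :
    ∀ᶠ n : ℕ in atTop, ‖alph x n / (x + 1) - 2 * (n : ℂ) ^ 2‖ ≤ (n : ℝ) ^ 2 := by
  have h1 : x + 1 ≠ 0 := x_add_ne hx (by simp)
  set M : ℝ := ‖2 * x + 4‖ + ‖(x ^ 3 + 4 * x ^ 2 + 16 / 3 * x) / (x + 1)‖ + 3 / ‖x + 1‖ with hM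
  filter_upwards [eventually_ge_atTop 1, eventually_ge_atTop ⌈M⌉₊] with n hn1 hn2
  have hnM : M ≤ n := (Nat.le_ceil M).trans (by exact_mod_cast hn2)
  have hn1' : (1 : ℝ) ≤ n := by exact_mod_cast hn1
  have e : alph x n / (x + 1) - 2 * (n : ℂ) ^ 2 =
      (n : ℂ) * (2 * x + 4) + (x ^ 3 + 4 * x ^ 2 + 16 / 3 * x) / (x + 1) + (c0 n : ℂ) / (x + 1) := by
    unfold alph
    field_simp
    ring
  have hc : ‖(c0 n : ℂ) / (x + 1)‖ ≤ 3 / ‖x + 1‖ := by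
    rw [norm_div, Complex.norm_real]
    gcongr
    unfold c0
    split_ifs <;> norm_num
  have h2 : ‖(n : ℂ) * (2 * x + 4)‖ = n * ‖2 * x + 4‖ := by
    rw [norm_mul, Complex.norm_natCast]
  rw [e]
  refine norm_add₃_le.trans ?_
  rw [h2]
  have p1 := norm_nonneg ((x ^ 3 + 4 * x ^ 2 + 16 / 3 * x) / (x + 1))
  have p2 : 0 ≤ 3 / ‖x + 1‖ := by positivity
  nlinarith

lemma func_eq (x : ℂ) (hx : 0 < x.re) {v v' : ℂ}
    (hv : Tendsto (fun n => AA x n / BB x n) atTop (nhds v))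
    (hv' : Tendsto (fun n => AA (x + 2) n / BB (x + 2) n) atTop (nhds v')) :
    (x + 2 / 3) ^ 3 * v' = (x + 4 / 3) ^ 3 * v := by
  have hx2 : 0 < (x + 2).re := by simp; linarith
  have h1 : x + 1 ≠ 0 := x_add_ne hx (by simp)
  have hq : (x + 4 / 3) ^ 3 ≠ 0 := pow_ne_zero _ (x_add_ne hx (by norm_num))
  have key : ∀ᶠ n : ℕ in atTop,
      ‖(x + 2 / 3) ^ 3 / (x + 4 / 3) ^ 3 * (AA (x + 2) (n + 1) / BB (x + 2) (n + 1)) - v‖ ≤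
        4 * ‖AA x (n + 1) / BB x (n + 1) - v‖ + 3 * ‖AA x n / BB x n - v‖ := by
    filter_upwards [alph_bound x hx, eventually_ge_atTop 1] with n hn hn1
    obtain ⟨m, rfl⟩ : ∃ m, n = m + 1 := ⟨n - 1, by omega⟩
    have hA := AA_shift x (m + 1)
    have hB := BB_shift x (m + 1)
    have b' := B_ne hx2 kap_pos (BB_rec (x + 2)) (BB0 _) (BB1 _) (m + 1)
    have b1 := B_ne hx kap_pos (BB_rec x) (BB0 _) (BB1 _) (m + 1)
    have b0 := B_ne hx kap_pos (BB_rec x) (BB0 _) (BB1 _) m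
    have hD := DD_pos hx kap_pos (BB_rec x) (BB0 _) (BB1 _) m
    unfold DD at hD
    have hk := kap_pos (m + 1 + 1)
    have hn1' : (1 : ℝ) ≤ ((m + 1 : ℕ) : ℝ) := by exact_mod_cast hn1
    set nn : ℝ := ((m + 1 : ℕ) : ℝ) with hnn
    have hnnC : ((m + 1 : ℕ) : ℂ) = (nn : ℂ) := by rw [hnn]; push_cast; rfl
    rw [hnnC] at hn hA hB
    set r : ℝ := 4 * (nn + 1) * kap (m + 1 + 1) with hr
    have hr0 : 0 < r := by positivity
    set s : ℂ := alph x (m + 1) / (x + 1) with hs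
    have hsa : alph x (m + 1) = s * (x + 1) := by rw [hs]; field_simp
    have hrC : 4 * ((nn : ℂ) + 1) * kap (m + 1 + 1) * (x + 1) = r * (x + 1) := by
      rw [hr]; push_cast; ring
    rw [hsa, hrC] at hA hB
    generalize AA (x + 2) (m + 1 + 1) = A' at *
    generalize BB (x + 2) (m + 1 + 1) = B' at *
    generalize AA x (m + 1 + 1) = A1 at *
    generalize BB x (m + 1 + 1) = B1 at *
    generalize AA x (m + 1) = A0 at *
    generalize BB x (m + 1) = B0 at *
    -- bounds on s
    have s_re : nn ^ 2 ≤ s.re := by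
      have h := (Complex.abs_re_le_norm (s - 2 * (nn : ℂ) ^ 2)).trans hn
      have e : (s - 2 * (nn : ℂ) ^ 2).re = s.re - 2 * nn ^ 2 := by
        have : (2 * (nn : ℂ) ^ 2) = ((2 * nn ^ 2 : ℝ) : ℂ) := by push_cast; rfl
        rw [this, Complex.sub_re, Complex.ofReal_re]
      rw [e] at h
      have := (abs_le.1 h).1
      linarith
    have s_norm : ‖s‖ ≤ 3 * nn ^ 2 := by
      have h : ‖s‖ ≤ ‖s - 2 * (nn : ℂ) ^ 2‖ + ‖2 * (nn : ℂ) ^ 2‖ := by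
        have := norm_add_le (s - 2 * (nn : ℂ) ^ 2) (2 * (nn : ℂ) ^ 2)
        rwa [sub_add_cancel] at this
      have e : ‖2 * (nn : ℂ) ^ 2‖ = 2 * nn ^ 2 := by
        rw [norm_mul, norm_pow, Complex.norm_of_nonneg (by linarith)]; simp
      linarith
    have s_ratio : ‖s‖ ≤ 3 * s.re := by linarith
    have s_pos : 0 < s.re := by nlinarith
    have s0 : s ≠ 0 := by rintro h; rw [h] at s_pos; simp at s_pos
    -- main lower bound
    have low : r * ‖B0‖ ≤ 3 * ‖s * B1 + r * B0‖ := by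
      have h3 : ‖s * B1 + r * B0‖ * (‖s‖ * ‖B0‖) =
          ‖(s * B1 + r * B0) * (starRingEnd ℂ) (s * B0)‖ := by
        rw [norm_mul, Complex.norm_conj, norm_mul]
      have h4 : ((s * B1 + r * B0) * (starRingEnd ℂ) (s * B0)).re =
          ‖s‖ ^ 2 * (B1 * (starRingEnd ℂ) B0).re + r * s.re * ‖B0‖ ^ 2 := by
        rw [← Complex.normSq_eq_norm_sq, ← Complex.normSq_eq_norm_sq, Complex.normSq_apply,
          Complex.normSq_apply]
        simp
        ring
      have h5 := Complex.re_le_norm ((s * B1 + r * B0) * (starRingEnd ℂ) (s * B0))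
      rw [h4, ← h3] at h5
      have h6 : 0 ≤ ‖s‖ ^ 2 * (B1 * (starRingEnd ℂ) B0).re := by positivity
      have hsB : 0 < ‖s‖ * ‖B0‖ := by positivity
      have h7 : r * ‖B0‖ * (‖s‖ * ‖B0‖) ≤ 3 * ‖s * B1 + r * B0‖ * (‖s‖ * ‖B0‖) := by
        have h8 : r * ‖B0‖ ^ 2 * ‖s‖ ≤ r * ‖B0‖ ^ 2 * (3 * s.re) := by gcongr
        nlinarith
      exact le_of_mul_le_mul_right h7 hsB
    have low2 : ‖s * B1‖ ≤ 4 * ‖s * B1 + r * B0‖ := by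
      have : ‖s * B1‖ ≤ ‖s * B1 + r * B0‖ + ‖r * B0‖ := by
        simpa using norm_sub_le (s * B1 + r * B0) (r * B0)
      rw [norm_mul (r : ℂ), Complex.norm_of_nonneg hr0.le] at this
      linarith
    set W := s * B1 + r * B0 with hW
    have hqB : (x + 4 / 3) ^ 3 * B' = (x + 1) * W := by rw [hB, hW]; ring
    have hW0 : W ≠ 0 := by
      intro h
      rw [h, mul_zero] at hqB
      exact mul_ne_zero hq b' hqB
    have e : (x + 2 / 3) ^ 3 / (x + 4 / 3) ^ 3 * (A' / B') - v =
        (s * B1 * (A1 / B1 - v) + r * B0 * (A0 / B0 - v)) / W := by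
      rw [div_mul_div_comm, hA, hqB]
      field_simp
      rw [hW]
      ring
    have hWp : 0 < ‖W‖ := norm_pos_iff.2 hW0
    rw [e, norm_div, div_le_iff₀ hWp]
    refine (norm_add_le _ _).trans ?_
    rw [norm_mul, norm_mul (r * B0 : ℂ), norm_mul (r : ℂ), Complex.norm_of_nonneg hr0.le]
    have g1 : ‖s * B1‖ * ‖A1 / B1 - v‖ ≤ 4 * ‖W‖ * ‖A1 / B1 - v‖ := by gcongr
    have g2 : r * ‖B0‖ * ‖A0 / B0 - v‖ ≤ 3 * ‖W‖ * ‖A0 / B0 - v‖ := by gcongr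
    linarith
  have hv1 := (tendsto_add_atTop_iff_nat 1).2 hv
  have hv1' := (tendsto_add_atTop_iff_nat 1).2 hv'
  have z : Tendsto (fun n : ℕ => 4 * ‖AA x (n + 1) / BB x (n + 1) - v‖ +
      3 * ‖AA x n / BB x n - v‖) atTop (nhds 0) := by
    have a1 := ((hv1.sub_const v).norm.const_mul 4).add ((hv.sub_const v).norm.const_mul 3)
    simpa using a1
  have l1 := squeeze_zero_norm' key z
  have l2 := (hv1'.const_mul ((x + 2 / 3) ^ 3 / (x + 4 / 3) ^ 3)).sub_const v
  have := tendsto_nhds_unique l1 l2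
  have h2 : v = (x + 2 / 3) ^ 3 / (x + 4 / 3) ^ 3 * v' := by linear_combination this
  rw [h2, ← mul_assoc, mul_div_cancel₀ _ hq]

lemma V_gamma {V : ℂ → ℂ}
    (hV : ∀ x : ℂ, 0 < x.re → Tendsto (fun n => AA x n / BB x n) atTop (nhds (V x)))
    (x : ℂ) (hx : 0 < x.re) :
    V x = (Complex.Gamma (x / 2 + 2 / 3) / Complex.Gamma (x / 2 + 1 / 3)) ^ 3 := by
  have hre : ∀ N : ℕ, x.re ≤ (x + 2 * N).re := by intro N; simp
  have hpos : ∀ N : ℕ, 0 < (x + 2 * N).re := fun N => hx.trans_le (hre N)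
  have iter : ∀ N : ℕ, V x * (∏ j ∈ Finset.range N, (x / 2 + 2 / 3 + j)) ^ 3 =
      V (x + 2 * N) * (∏ j ∈ Finset.range N, (x / 2 + 1 / 3 + j)) ^ 3 := by
    intro N
    induction N with
    | zero => simp
    | succ N ih =>
      have hs : (x + 2 * N + 2) = x + 2 * ((N + 1 : ℕ) : ℂ) := by push_cast; ring
      have f := func_eq (x + 2 * N) (hpos N) (hV _ (hpos N))
        (v' := V (x + 2 * ((N + 1 : ℕ) : ℂ))) (by rw [hs]; exact hV _ (hpos _))
      rw [Finset.prod_range_succ, Finset.prod_range_succ]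
      linear_combination (x / 2 + 2 / 3 + N) ^ 3 * ih -
        (∏ j ∈ Finset.range N, (x / 2 + 1 / 3 + (j : ℂ))) ^ 3 / 8 * f
  have hz : 0 < (x / 2).re := by
    have : (x / 2).re = x.re / 2 := by simp
    rw [this]; linarith
  have hG1 : Complex.Gamma (x / 2 + 1 / 3) ≠ 0 :=
    Complex.Gamma_ne_zero_of_re_pos (by simp at hz ⊢; linarith)
  -- asymptotics
  have asym : Tendsto (fun N : ℕ => V (x + 2 * ((N + 1 : ℕ) : ℂ)) / N) atTop (nhds 1) := by
    rw [tendsto_iff_norm_sub_tendsto_zero]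
    have hb : ∀ᶠ N : ℕ in atTop, ‖V (x + 2 * ((N + 1 : ℕ) : ℂ)) / N - 1‖ ≤
        (kap 1 / x.re + ‖x / 2 + 1‖) / (N : ℝ) := by
      filter_upwards [eventually_ge_atTop 1] with N hN
      have hN0 : (N : ℂ) ≠ 0 := Nat.cast_ne_zero.2 (by omega)
      have hb := limit_bound (hpos (N + 1)) kap_pos (AA_rec _) (BB_rec _) (BB0 _) (BB1 _) (AA0 _)
        (AA1 _) (hV _ (hpos (N + 1)))
      have hb2 : kap 1 / (x + 2 * ((N + 1 : ℕ) : ℂ)).re ≤ kap 1 / x.re := by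
        have := kap_pos 1
        have := hre (N + 1)
        gcongr
      have e : V (x + 2 * ((N + 1 : ℕ) : ℂ)) / N - 1 =
          ((V (x + 2 * ((N + 1 : ℕ) : ℂ)) - (x + 2 * ((N + 1 : ℕ) : ℂ)) / 2) + (x / 2 + 1)) / N := by
        field_simp
        push_cast
        ring
      rw [e, norm_div, Complex.norm_natCast]
      gcongr
      exact (norm_add_le _ _).trans (by linarith)
    refine squeeze_zero' (Eventually.of_forall fun _ => norm_nonneg _) hb ?_
    exact tendsto_const_div_atTop_nhds_zero_nat _
  have hG := (((Complex.GammaSeq_tendsto_Gamma (x / 2 + 2 / 3)).div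
    (Complex.GammaSeq_tendsto_Gamma (x / 2 + 1 / 3)) hG1).pow 3)
  have hprod := asym.mul hG
  rw [one_mul] at hprod
  refine tendsto_nhds_unique (tendsto_const_nhds.congr' ?_) hprod
  filter_upwards [eventually_ge_atTop 1] with N hN
  have hN0 : (N : ℂ) ≠ 0 := Nat.cast_ne_zero.2 (by omega)
  have it := iter (N + 1)
  have hne : ∀ r : ℂ, 0 ≤ r.re → ∏ j ∈ Finset.range (N + 1), (x / 2 + r + (j : ℂ)) ≠ 0 := by
    intro r hr
    refine Finset.prod_ne_zero_iff.2 fun j _ => ?_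
    rw [add_assoc]
    exact x_add_ne hz (by simp; positivity)
  have n1 := hne (2 / 3) (by norm_num)
  have n2 := hne (1 / 3) (by norm_num)
  have hf : ((N.factorial : ℕ) : ℂ) ≠ 0 := Nat.cast_ne_zero.2 (Nat.factorial_ne_zero N)
  have hc0 : (N : ℂ) ^ (x / 2 + 1 / 3) ≠ 0 := by
    rw [Complex.cpow_ne_zero_iff]; exact Or.inl hN0
  have hc : (N : ℂ) ^ (x / 2 + 2 / 3) = (N : ℂ) ^ (x / 2 + 1 / 3) * (N : ℂ) ^ (1 / 3 : ℂ) := by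
    rw [← Complex.cpow_add _ _ hN0]
    congr 1
    ring
  have hc3 : ((N : ℂ) ^ (1 / 3 : ℂ)) ^ 3 = N := by
    rw [← Complex.cpow_nat_mul]
    norm_num
  simp only [Pi.div_apply, Complex.GammaSeq]
  rw [hc]
  generalize (∏ j ∈ Finset.range (N + 1), (x / 2 + 2 / 3 + (j : ℂ))) = P2 at *
  generalize (∏ j ∈ Finset.range (N + 1), (x / 2 + 1 / 3 + (j : ℂ))) = P1 at *
  generalize (N : ℂ) ^ (x / 2 + 1 / 3) = C1 at *
  generalize (N : ℂ) ^ (1 / 3 : ℂ) = C3 at *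
  have : C1 * C3 * (N.factorial : ℂ) / P2 / (C1 * (N.factorial : ℂ) / P1) = C3 * P1 / P2 := by
    field_simp
  rw [this, div_pow, mul_pow, hc3]
  field_simp
  linear_combination it

theorem stmt11 (x : ℂ) (hx : 0 < x.re) :
    ∃ v : ℂ, v ≠ 0 ∧ CFConvergesTo aSeq (bSeq x) v ∧
      Complex.Gamma ((x + 2 / 3) / 2) ^ 3 / Complex.Gamma ((x + 4 / 3) / 2) ^ 3 = 1 / v := by
  have hex : ∀ x : ℂ, ∃ v : ℂ, 0 < x.re →
      Tendsto (fun n => AA x n / BB x n) atTop (nhds v) := by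
    intro x
    by_cases h : 0 < x.re
    · obtain ⟨v, hv⟩ := exists_limit h kap_pos kap_le (AA_rec x) (BB_rec x) (BB0 _) (BB1 _) (AA0 _)
      exact ⟨v, fun _ => hv⟩
    · exact ⟨0, fun h' => absurd h' h⟩
  choose V hV using hex
  have hval := V_gamma hV x hx
  have hz : 0 < (x / 2).re := by
    have : (x / 2).re = x.re / 2 := by simp
    rw [this]; linarith
  have hG1 : Complex.Gamma (x / 2 + 1 / 3) ≠ 0 :=
    Complex.Gamma_ne_zero_of_re_pos (by simp at hz ⊢; linarith)
  have hG2 : Complex.Gamma (x / 2 + 2 / 3) ≠ 0 :=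
    Complex.Gamma_ne_zero_of_re_pos (by simp at hz ⊢; linarith)
  refine ⟨V x, ?_, ⟨?_, hV x hx⟩, ?_⟩
  · rw [hval]
    exact pow_ne_zero _ (div_ne_zero hG2 hG1)
  · filter_upwards [eventually_ge_atTop 1] with n hn
    obtain ⟨m, rfl⟩ : ∃ m, n = m + 1 := ⟨n - 1, by omega⟩
    exact B_ne hx kap_pos (BB_rec x) (BB0 _) (BB1 _) m
  · rw [hval, show (x + 2 / 3) / 2 = x / 2 + 1 / 3 by ring,
      show (x + 4 / 3) / 2 = x / 2 + 2 / 3 by ring]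
    field_simp
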